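/- Let b be a connected graph over a countably infinite set X and let q : X → ℝ be a potential. Let u, v : X → ℝ be such that u and v − u are strictly positive functions in F(X) that are H-superharmonic on X and H-harmonic outside a finite set. Set u₀ := u/v and assume (a) u₀ is proper as a map X → (0,1) with sup u₀ = 1, and (b) sup_{x∼y} [u₀(x)(1 − u₀(y))] / [u₀(y)(1 − u₀(x))] < ∞. Set w := H[(u(v−u))^{1/2}] / (u(v−u))^{1/2}. Then w is an optimal Hardy weight for h in X: (i) h(φ) ≥ Σ_x w(x)φ(x)² for every finitely supported φ and there is no w̃ : X → [0,∞), w̃ ≠ 0, with h(φ) ≥ Σ_x (w(x)+w̃(x))φ(x)² for all finitely supported φ; (ii) Σ_{x∈X} u(x)·(v−u)(x)·w(x) = ∞; (iii) for every λ > 0 and every finite W ⊆ X there is a finitely supported φ supported in X∖W with h(φ) < (1+λ)Σ_x w(x)φ(x)². Moreover, w(x) = (1/2)Σ_{y∈X} b(x,y)[(u(y)/u(x))^{1/2} − ((v−u)(y)/(v−u)(x))^{1/2}]² for all x with Hu(x) = Hv(x) = 0. -/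

import Mathlib

/-- `f` belongs to `F(X)`: `∑_y b x y |f y| < ∞` for every `x`. -/
def memF {X : Type} (b : X → X → ℝ) (f : X → ℝ) : Prop :=
  ∀ x : X, Summable fun y => b x y * |f y|

/-- The formal graph Laplacian `L f x = ∑_y b x y (f x - f y)`. -/
noncomputable def lap {X : Type} (b : X → X → ℝ) (f : X → ℝ) (x : X) : ℝ :=
  ∑' y : X, b x y * (f x - f y)

/-- The formal Schrödinger operator `H = L + q`. -/
noncomputable def schrod {X : Type} (b : X → X → ℝ) (q : X → ℝ) (f : X → ℝ) (x : X) : ℝ :=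
  lap b f x + q x * f x

/-- The quadratic form `h(φ)` of `H = L + q`. -/
noncomputable def quadForm {X : Type} (b : X → X → ℝ) (q : X → ℝ) (φ : X → ℝ) : ℝ :=
  (1 / 2) * (∑' p : X × X, b p.1 p.2 * (φ p.1 - φ p.2) ^ 2) + ∑' x : X, q x * φ x ^ 2

/-!
Write `a = u`, `c = v - u`, `g = log (a / c)` and `ψ = (ac)^{1/2}`. The ground state transform
turns `h - w` into the energy with edge weights `b(x,y) ψ(x) ψ(y)`, so `h ≥ w`. The current
`J(x,y) = b(x,y) (a(x) c(y) - c(x) a(y))` is divergence free outside a finite set, hence its flux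
across the level sets of the proper function `g` is the same at all high levels, and likewise at
all low levels. As `J(x,y) (g(x) - g(y))` dominates `b(x,y) ψ(x) ψ(y) (g(x) - g(y))²`, a trapezoid
in `g` with ramps of length `n` has energy `O(1/n)`. Such null sequences give criticality, and
trapezoids of fixed slope with long plateaus give optimality near infinity, once `∑ ψ² w = ∞`. The
latter holds because the variation of `g` along edges is bounded: this makes
`J(x,y) (g(x) - g(y))` also at most a multiple of the contribution of the edge to `ψ² w`, so a
convergent sum would force the flux at high levels, which is positive by connectedness, to vanish.
-/

namespace OptimalHardy

open Function (HasFiniteSupport)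

section FiniteRange

variable {X : Type*} {m : X → X → ℝ} {f : X → ℝ}

lemma hasFiniteSupport_mul_fst (hm : ∀ x, HasFiniteSupport (m x)) (hf : HasFiniteSupport f) :
    HasFiniteSupport fun p : X × X => m p.1 p.2 * f p.1 := by
  refine (hf.biUnion fun x _ => (hm x).image (Prod.mk x)).subset ?_
  rintro ⟨x, y⟩ hxy
  exact Set.mem_biUnion (right_ne_zero_of_mul hxy) ⟨y, left_ne_zero_of_mul hxy, rfl⟩

lemma hasFiniteSupport_mul_sub (hm : ∀ x, HasFiniteSupport (m x))
    (hm' : ∀ y, HasFiniteSupport fun x => m x y) (hf : HasFiniteSupport f) :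
    HasFiniteSupport fun p : X × X => m p.1 p.2 * (f p.1 - f p.2) := by
  have hsnd : HasFiniteSupport fun p : X × X => m p.1 p.2 * f p.2 :=
    (hasFiniteSupport_mul_fst hm' hf).preimage Prod.swap_injective.injOn
  simpa only [mul_sub] using (hasFiniteSupport_mul_fst hm hf).fun_sub hsnd

lemma summable_mul_sq (hf : HasFiniteSupport f) (w : X → ℝ) :
    Summable fun x => w x * f x ^ 2 := by
  simp only [sq, ← mul_assoc]
  exact summable_of_hasFiniteSupport (hf.fun_mul_right _)

/-- The energy `½ ∑_{x,y} m(x,y) (f(x) - f(y))²` of `f` with edge weights `m`. -/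
noncomputable def energy (m : X → X → ℝ) (f : X → ℝ) : ℝ :=
  (1 / 2) * ∑' p : X × X, m p.1 p.2 * (f p.1 - f p.2) ^ 2

/-- The pairing `½ ∑_{x,y} J(x,y) (f(x) - f(y))` of a flow `J` with the gradient of `f`. -/
noncomputable def fluxPairing (J : X → X → ℝ) (f : X → ℝ) : ℝ :=
  (1 / 2) * ∑' p : X × X, J p.1 p.2 * (f p.1 - f p.2)

lemma energy_nonneg (hm : ∀ x y, 0 ≤ m x y) (f : X → ℝ) : 0 ≤ energy m f :=
  mul_nonneg one_half_pos.le (tsum_nonneg fun _ => mul_nonneg (hm _ _) (sq_nonneg _))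

lemma hasFiniteSupport_mul_sub_sq (hm : ∀ x, HasFiniteSupport (m x))
    (hsymm : ∀ x y, m x y = m y x) (hf : HasFiniteSupport f) :
    HasFiniteSupport fun p : X × X => m p.1 p.2 * (f p.1 - f p.2) ^ 2 := by
  have hm' (y : X) : HasFiniteSupport fun x => m x y := by simpa only [hsymm _ y] using hm y
  simpa only [sq, mul_assoc] using
    (hasFiniteSupport_mul_sub hm hm' hf).fun_mul_left fun p => f p.1 - f p.2

lemma hasFiniteSupport_antisymm_mul_sub {J : X → X → ℝ} (hJ : ∀ x, HasFiniteSupport (J x))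
    (hanti : ∀ x y, J x y = -J y x) (hf : HasFiniteSupport f) :
    HasFiniteSupport fun p : X × X => J p.1 p.2 * (f p.1 - f p.2) := by
  have hJ' (y : X) : HasFiniteSupport fun x => J x y := by
    simpa only [hanti _ y] using (hJ y).fun_neg
  exact hasFiniteSupport_mul_sub hJ hJ' hf

lemma fluxPairing_eq_tsum_mul_tsum {J : X → X → ℝ} (hJ : ∀ x, HasFiniteSupport (J x))
    (hanti : ∀ x y, J x y = -J y x) (hf : HasFiniteSupport f) :
    fluxPairing J f = ∑' x, f x * ∑' y, J x y := by
  have hfst : Summable fun p : X × X => J p.1 p.2 * f p.1 :=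
    summable_of_hasFiniteSupport (hasFiniteSupport_mul_fst hJ hf)
  have hswap (p : X × X) : J p.swap.1 p.swap.2 * f p.swap.1 = -(J p.1 p.2 * f p.2) := by
    rw [Prod.fst_swap, Prod.snd_swap, hanti p.2 p.1, neg_mul]
  have hsnd : HasSum (fun p : X × X => J p.1 p.2 * f p.2) (-∑' p : X × X, J p.1 p.2 * f p.1) := by
    have h := ((Equiv.prodComm X X).hasSum_iff.2 hfst.hasSum).neg
    simpa only [Function.comp_def, Equiv.prodComm_apply, hswap, neg_neg] using h
  have hsum : ∑' p : X × X, J p.1 p.2 * (f p.1 - f p.2) =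
      2 * ∑' p : X × X, J p.1 p.2 * f p.1 := by
    simp only [mul_sub]
    rw [hfst.tsum_sub hsnd.summable, hsnd.tsum_eq]
    ring
  rw [fluxPairing, hsum, hfst.tsum_prod]
  simp only [tsum_mul_right, mul_comm (f _)]
  ring

end FiniteRange

section GroundState

variable {X : Type} {b : X → X → ℝ} {q ψ f : X → ℝ}

/-- The weight `Hψ / ψ`; it is the Hardy weight of the supersolution construction when `ψ` is the
geometric mean of two positive supersolutions. -/
noncomputable def hardyWeight (b : X → X → ℝ) (q ψ : X → ℝ) (x : X) : ℝ :=
  schrod b q ψ x / ψ x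

/-- The edge weights `b(x,y) ψ(x) ψ(y)` of the ground state transform with respect to `ψ`. -/
def groundStateTransform (b : X → X → ℝ) (ψ : X → ℝ) (x y : X) : ℝ :=
  b x y * (ψ x * ψ y)

lemma groundStateTransform_comm (hsymm : ∀ x y, b x y = b y x) (x y : X) :
    groundStateTransform b ψ x y = groundStateTransform b ψ y x := by
  rw [groundStateTransform, groundStateTransform, hsymm x y, mul_comm (ψ x)]

lemma energy_mul (hsymm : ∀ x y, b x y = b y x) (hfin : ∀ x, HasFiniteSupport (b x))
    (hf : HasFiniteSupport f) :
    energy b (fun x => ψ x * f x) =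
      energy (groundStateTransform b ψ) f + ∑' x, ψ x * f x ^ 2 * lap b ψ x := by
  have hf2 : HasFiniteSupport fun x => ψ x * f x ^ 2 := by
    simpa only [sq] using (hf.fun_mul_left f).fun_mul_right ψ
  have hJ (x : X) : HasFiniteSupport fun y => b x y * (ψ x - ψ y) := (hfin x).fun_mul_left _
  have hanti (x y : X) : b x y * (ψ x - ψ y) = -(b y x * (ψ y - ψ x)) := by
    rw [hsymm x y]
    ring
  have hgst : Summable fun p : X × X =>
      groundStateTransform b ψ p.1 p.2 * (f p.1 - f p.2) ^ 2 :=
    summable_of_hasFiniteSupport <| hasFiniteSupport_mul_sub_sq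
      (fun x => (hfin x).fun_mul_left _) (groundStateTransform_comm hsymm) hf
  have hflux : Summable fun p : X × X =>
      b p.1 p.2 * (ψ p.1 - ψ p.2) * (ψ p.1 * f p.1 ^ 2 - ψ p.2 * f p.2 ^ 2) :=
    summable_of_hasFiniteSupport (hasFiniteSupport_antisymm_mul_sub hJ hanti hf2)
  unfold lap
  rw [← fluxPairing_eq_tsum_mul_tsum hJ hanti hf2, energy, energy, fluxPairing, ← mul_add,
    ← hgst.tsum_add hflux]
  congr! 3 with p
  rw [groundStateTransform]
  ring

lemma quadForm_mul (hsymm : ∀ x y, b x y = b y x) (hfin : ∀ x, HasFiniteSupport (b x))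
    (hψ : ∀ x, ψ x ≠ 0) (hf : HasFiniteSupport f) :
    quadForm b q (fun x => ψ x * f x) =
      ∑' x, hardyWeight b q ψ x * (ψ x * f x) ^ 2 + energy (groundStateTransform b ψ) f := by
  have hlap : Summable fun x => ψ x * lap b ψ x * f x ^ 2 := summable_mul_sq hf _
  have hpot : Summable fun x => q x * (ψ x * f x) ^ 2 := summable_mul_sq (hf.fun_mul_right ψ) q
  have hweight : ∑' x, hardyWeight b q ψ x * (ψ x * f x) ^ 2 =
      ∑' x, ψ x * f x ^ 2 * lap b ψ x + ∑' x, q x * (ψ x * f x) ^ 2 := by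
    simp only [mul_right_comm (ψ _) (f _ ^ 2)]
    rw [← hlap.tsum_add hpot]
    refine tsum_congr fun x => ?_
    rw [hardyWeight, schrod]
    have := hψ x
    field_simp
  change energy b (fun x => ψ x * f x) + _ = _
  rw [energy_mul hsymm hfin hf, hweight]
  ring

theorem tsum_hardyWeight_mul_sq_le_quadForm (hnonneg : ∀ x y, 0 ≤ b x y)
    (hsymm : ∀ x y, b x y = b y x) (hfin : ∀ x, HasFiniteSupport (b x)) (hψ : ∀ x, 0 < ψ x)
    {φ : X → ℝ} (hφ : HasFiniteSupport φ) :
    ∑' x, hardyWeight b q ψ x * φ x ^ 2 ≤ quadForm b q φ := by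
  have hquot (x : X) : ψ x * (φ x / ψ x) = φ x := mul_div_cancel₀ _ (hψ x).ne'
  have hfin' : HasFiniteSupport fun x => φ x / ψ x := by
    simpa only [div_eq_mul_inv] using hφ.fun_mul_left fun x => (ψ x)⁻¹
  have h := quadForm_mul (q := q) hsymm hfin (fun x => (hψ x).ne') hfin'
  simp only [hquot] at h
  rw [h]
  exact le_add_of_nonneg_right <| energy_nonneg
    (fun x y => mul_nonneg (hnonneg x y) (mul_pos (hψ x) (hψ y)).le) _

theorem eq_zero_of_forall_tsum_add_mul_sq_le_quadForm (hsymm : ∀ x y, b x y = b y x)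
    (hfin : ∀ x, HasFiniteSupport (b x)) (hψ : ∀ x, ψ x ≠ 0)
    (hnull : ∀ z, ∀ ε > 0, ∃ f : X → ℝ, HasFiniteSupport f ∧ f z = 1 ∧
      energy (groundStateTransform b ψ) f < ε)
    {wt : X → ℝ} (hwt : ∀ x, 0 ≤ wt x)
    (hle : ∀ φ : X → ℝ, HasFiniteSupport φ →
      ∑' x, (hardyWeight b q ψ x + wt x) * φ x ^ 2 ≤ quadForm b q φ) :
    wt = 0 := by
  by_contra hne
  obtain ⟨z, hz⟩ := Function.ne_iff.1 hne
  have hψz : 0 < ψ z ^ 2 := by have := hψ z; positivity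
  obtain ⟨f, hf, hfz, henergy⟩ := hnull z (wt z * ψ z ^ 2) (mul_pos ((hwt z).lt_of_ne' hz) hψz)
  have hψf : HasFiniteSupport fun x => ψ x * f x := hf.fun_mul_right ψ
  have hsingle : wt z * ψ z ^ 2 ≤ ∑' x, wt x * (ψ x * f x) ^ 2 := by
    simpa only [hfz, mul_one] using
      (summable_mul_sq hψf wt).le_tsum z fun x _ => mul_nonneg (hwt x) (sq_nonneg _)
  have h := hle _ hψf
  simp only [add_mul] at h
  rw [(summable_mul_sq hψf _).tsum_add (summable_mul_sq hψf wt), quadForm_mul hsymm hfin hψ hf] at h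
  linarith

end GroundState

section Supersolution

variable {X : Type} {b : X → X → ℝ} {q a c : X → ℝ}

/-- The pointwise geometric mean `(ac)^{1/2}`, the ground state of the optimal Hardy weight. -/
noncomputable def geomMean (a c : X → ℝ) (x : X) : ℝ :=
  √(a x * c x)

/-- The value of the supersolution weight `H(ac)^{1/2} / (ac)^{1/2}` where `a` and `c` are
harmonic; it does not involve the potential. -/
noncomputable def harmonicWeight (b : X → X → ℝ) (a c : X → ℝ) (x : X) : ℝ :=
  (1 / 2) * ∑' y, b x y * (√(a y / a x) - √(c y / c x)) ^ 2

lemma geomMean_pos (ha : ∀ x, 0 < a x) (hc : ∀ x, 0 < c x) (x : X) : 0 < geomMean a c x :=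
  Real.sqrt_pos.2 (mul_pos (ha x) (hc x))

lemma geomMean_sq (ha : ∀ x, 0 < a x) (hc : ∀ x, 0 < c x) (x : X) :
    geomMean a c x ^ 2 = a x * c x :=
  Real.sq_sqrt (mul_pos (ha x) (hc x)).le

lemma geomMean_div_geomMean (ha : ∀ x, 0 < a x) (hc : ∀ x, 0 < c x) (x y : X) :
    geomMean a c y / geomMean a c x = √(a y / a x) * √(c y / c x) := by
  rw [geomMean, geomMean, ← Real.sqrt_div (mul_pos (ha y) (hc y)).le,
    ← Real.sqrt_mul (div_pos (ha y) (ha x)).le, div_mul_div_comm]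

lemma summable_row {x : X} (hfin : HasFiniteSupport (b x)) (f : X → ℝ) :
    Summable fun y => b x y * f y :=
  summable_of_hasFiniteSupport (hfin.fun_mul_left f)

lemma schrod_sub {x : X} (hfin : HasFiniteSupport (b x)) (f g : X → ℝ) :
    schrod b q (fun y => f y - g y) x = schrod b q f x - schrod b q g x := by
  have hlap : lap b (fun y => f y - g y) x = lap b f x - lap b g x := by
    unfold lap
    rw [← (summable_row hfin _).tsum_sub (summable_row hfin _)]
    exact tsum_congr fun y => by ring
  rw [schrod, schrod, schrod, hlap]
  ring

lemma hardyWeight_eq_tsum_add {ψ : X → ℝ} {x : X} (hψ : ψ x ≠ 0) :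
    hardyWeight b q ψ x = ∑' y, b x y * (1 - ψ y / ψ x) + q x := by
  rw [hardyWeight, schrod, lap, add_div, mul_div_cancel_right₀ _ hψ, ← tsum_div_const]
  congr! 3 with y
  field_simp

/-- With `s = (a(y)/a(x))^{1/2}` and `t = (c(y)/c(x))^{1/2}` this is the summed identity
`1 - st = ½(1 - s²) + ½(1 - t²) + ½(s - t)²`. -/
theorem hardyWeight_geomMean {x : X} (hfin : HasFiniteSupport (b x)) (ha : ∀ x, 0 < a x)
    (hc : ∀ x, 0 < c x) :
    hardyWeight b q (geomMean a c) x =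
      (1 / 2) * (hardyWeight b q a x + hardyWeight b q c x) + harmonicWeight b a c x := by
  have hsum : ∑' y, b x y * (1 - geomMean a c y / geomMean a c x) =
      (1 / 2) * (∑' y, b x y * (1 - a y / a x) + ∑' y, b x y * (1 - c y / c x)) +
        harmonicWeight b a c x := by
    rw [harmonicWeight, ← mul_add, ← (summable_row hfin _).tsum_add (summable_row hfin _),
      ← ((summable_row hfin _).add (summable_row hfin _)).tsum_add (summable_row hfin _),
      ← tsum_mul_left]
    refine tsum_congr fun y => ?_
    rw [geomMean_div_geomMean ha hc]
    have hs := Real.sq_sqrt (div_pos (ha y) (ha x)).le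
    have ht := Real.sq_sqrt (div_pos (hc y) (hc x)).le
    linear_combination (-b x y / 2) * hs + (-b x y / 2) * ht
  rw [hardyWeight_eq_tsum_add (geomMean_pos ha hc x).ne', hsum,
    hardyWeight_eq_tsum_add (ha x).ne', hardyWeight_eq_tsum_add (hc x).ne']
  ring

lemma hardyWeight_geomMean_of_harmonic {x : X} (hfin : HasFiniteSupport (b x))
    (ha : ∀ x, 0 < a x) (hc : ∀ x, 0 < c x) (hHa : schrod b q a x = 0)
    (hHc : schrod b q c x = 0) :
    hardyWeight b q (geomMean a c) x = harmonicWeight b a c x := by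
  rw [hardyWeight_geomMean hfin ha hc, hardyWeight, hardyWeight, hHa, hHc]
  simp

lemma harmonicWeight_nonneg (hnonneg : ∀ x y, 0 ≤ b x y) (x : X) :
    0 ≤ harmonicWeight b a c x :=
  mul_nonneg one_half_pos.le (tsum_nonneg fun _ => mul_nonneg (hnonneg _ _) (sq_nonneg _))

end Supersolution

section Ramp

/-- The ramp rising linearly from `0` at `α` to `1` at `α + n`. -/
noncomputable def ramp (α n t : ℝ) : ℝ :=
  max 0 (min 1 ((t - α) / n))

/-- The trapezoid rising on `[α, α + n]`, equal to `1` on `[α + n, β]` and falling on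
`[β, β + n]`. -/
noncomputable def plateau (α β n t : ℝ) : ℝ :=
  ramp α n t - ramp β n t

variable {α β n t : ℝ}

lemma ramp_of_le (hn : 0 < n) (ht : t ≤ α) : ramp α n t = 0 :=
  max_eq_left <| (min_le_right _ _).trans <| div_nonpos_of_nonpos_of_nonneg (by linarith) hn.le

lemma ramp_of_ge (hn : 0 < n) (ht : α + n ≤ t) : ramp α n t = 1 := by
  rw [ramp, min_eq_left ((one_le_div hn).2 (by linarith)), max_eq_right zero_le_one]

lemma ramp_pos (hn : 0 < n) (ht : α < t) : 0 < ramp α n t :=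
  lt_max_of_lt_right (lt_min one_pos (div_pos (sub_pos.2 ht) hn))

lemma ramp_mono (α : ℝ) (hn : 0 < n) : Monotone (ramp α n) := fun s t hst => by
  unfold ramp
  gcongr

lemma ramp_sub_ramp_le (α : ℝ) (hn : 0 < n) {s : ℝ} (hst : s ≤ t) :
    ramp α n t - ramp α n s ≤ 1 / n * (t - s) := by
  have hstep : (t - α) / n = (s - α) / n + 1 / n * (t - s) := by ring
  have hnonneg : 0 ≤ 1 / n * (t - s) := mul_nonneg (one_div_pos.2 hn).le (sub_nonneg.2 hst)
  rw [ramp, ramp, hstep]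
  grind

lemma exists_ramp_sub_eq_mul (α : ℝ) (hn : 0 < n) (s t : ℝ) :
    ∃ θ, 0 ≤ θ ∧ θ ≤ 1 / n ∧ ramp α n s - ramp α n t = θ * (s - t) := by
  wlog hlt : t < s generalizing s t
  · rcases (not_lt.1 hlt).eq_or_lt with rfl | hts
    · exact ⟨0, le_rfl, (one_div_pos.2 hn).le, by simp⟩
    · obtain ⟨θ, h0, h1, h⟩ := this t s hts
      exact ⟨θ, h0, h1, by linarith⟩
  have hpos : 0 < s - t := sub_pos.2 hlt
  refine ⟨(ramp α n s - ramp α n t) / (s - t), ?_, ?_, (div_mul_cancel₀ _ hpos.ne').symm⟩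
  · exact div_nonneg (sub_nonneg.2 (ramp_mono α hn hlt.le)) hpos.le
  · exact (div_le_iff₀ hpos).2 (ramp_sub_ramp_le α hn hlt.le)

lemma plateau_of_le (hn : 0 < n) (hαβ : α ≤ β) (ht : t ≤ α) : plateau α β n t = 0 := by
  rw [plateau, ramp_of_le hn ht, ramp_of_le hn (ht.trans hαβ), sub_zero]

lemma plateau_eq_one (hn : 0 < n) (hα : α + n ≤ t) (hβ : t ≤ β) : plateau α β n t = 1 := by
  rw [plateau, ramp_of_ge hn hα, ramp_of_le hn hβ, sub_zero]

end Ramp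

section ProperFlux

variable {X : Type*}

/-- `J` is an antisymmetric flow, carried by pairs along which the level function `g` varies by at
most `L`, and each compact band of levels is finite. -/
structure IsProperFlux (J : X → X → ℝ) (g : X → ℝ) (L : ℝ) : Prop where
  antisymm : ∀ x y, J x y = -J y x
  finite_preimage_Icc : ∀ α β, (g ⁻¹' Set.Icc α β).Finite
  abs_sub_le : ∀ x y, J x y ≠ 0 → |g x - g y| ≤ L

namespace IsProperFlux

variable {J : X → X → ℝ} {g : X → ℝ} {K : Set X} {L α β m n : ℝ}

lemma hasFiniteSupport_row (hJ : IsProperFlux J g L) (x : X) : HasFiniteSupport (J x) := by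
  refine (hJ.finite_preimage_Icc (g x - L) (g x + L)).subset fun y hy => ?_
  have := abs_le.1 (hJ.abs_sub_le x y hy)
  constructor <;> linarith

lemma summable_mul_ramp_sub (hJ : IsProperFlux J g L) (α : ℝ) (hn : 0 < n) :
    Summable fun p : X × X => J p.1 p.2 * (ramp α n (g p.1) - ramp α n (g p.2)) := by
  let band := g ⁻¹' Set.Icc (α - L) (α + n + L)
  have hband : HasFiniteSupport (band.indicator fun _ => (1 : ℝ)) :=
    (hJ.finite_preimage_Icc _ _).subset Set.support_indicator_subset
  refine summable_of_hasFiniteSupport <|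
    (hasFiniteSupport_mul_fst hJ.hasFiniteSupport_row hband).subset fun p hp => ?_
  have hJp : J p.1 p.2 ≠ 0 := left_ne_zero_of_mul hp
  have hjump := abs_le.1 (hJ.abs_sub_le _ _ hJp)
  have hmem : p.1 ∈ band := by
    by_contra hnot
    refine right_ne_zero_of_mul hp (sub_eq_zero.2 ?_)
    rcases not_and_or.1 hnot with h | h
    · rw [ramp_of_le hn (by linarith), ramp_of_le hn (by linarith)]
    · rw [ramp_of_ge hn (by linarith), ramp_of_ge hn (by linarith)]
  simpa [hmem] using hJp

lemma fluxPairing_eq_zero (hJ : IsProperFlux J g L) (hdiv : ∀ x ∉ K, ∑' y, J x y = 0)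
    {f : X → ℝ} (hf : HasFiniteSupport f) (hfK : ∀ x ∈ K, f x = 0) : fluxPairing J f = 0 := by
  rw [fluxPairing_eq_tsum_mul_tsum hJ.hasFiniteSupport_row hJ.antisymm hf,
    tsum_congr fun x => ?_, tsum_zero]
  by_cases hx : x ∈ K
  · rw [hfK x hx, zero_mul]
  · rw [hdiv x hx, mul_zero]

lemma hasFiniteSupport_ramp_sub_ramp (hJ : IsProperFlux J g L) (hm : 0 < m) (hn : 0 < n) :
    HasFiniteSupport fun x => ramp α m (g x) - ramp β n (g x) := by
  refine (hJ.finite_preimage_Icc (min α β) (max (α + m) (β + n))).subset fun x hx => ?_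
  by_contra hnot
  refine hx ?_
  rcases not_and_or.1 hnot with h | h
  · rw [not_le, lt_min_iff] at h
    simp only [ramp_of_le hm h.1.le, ramp_of_le hn h.2.le, sub_self]
  · rw [not_le, max_lt_iff] at h
    simp only [ramp_of_ge hm h.1.le, ramp_of_ge hn h.2.le, sub_self]

/-- The difference of the two ramps is finitely supported and vanishes at the sources in `K`. -/
lemma fluxPairing_ramp_eq (hJ : IsProperFlux J g L) (hdiv : ∀ x ∉ K, ∑' y, J x y = 0)
    (hm : 0 < m) (hn : 0 < n) (hK : ∀ x ∈ K, ramp α m (g x) = ramp β n (g x)) :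
    fluxPairing J (fun x => ramp α m (g x)) = fluxPairing J fun x => ramp β n (g x) := by
  have h := hJ.fluxPairing_eq_zero hdiv (hJ.hasFiniteSupport_ramp_sub_ramp hm hn)
    fun x hx => sub_eq_zero.2 (hK x hx)
  rw [← sub_eq_zero, ← h]
  unfold fluxPairing
  rw [← mul_sub, ← (hJ.summable_mul_ramp_sub α hm).tsum_sub (hJ.summable_mul_ramp_sub β hn)]
  congr! 3 with p
  ring

lemma fluxPairing_ramp_eq_of_le (hJ : IsProperFlux J g L) (hdiv : ∀ x ∉ K, ∑' y, J x y = 0)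
    (hm : 0 < m) (hn : 0 < n) (hα : ∀ x ∈ K, g x ≤ α) (hβ : ∀ x ∈ K, g x ≤ β) :
    fluxPairing J (fun x => ramp α m (g x)) = fluxPairing J fun x => ramp β n (g x) :=
  hJ.fluxPairing_ramp_eq hdiv hm hn fun x hx => by
    rw [ramp_of_le hm (hα x hx), ramp_of_le hn (hβ x hx)]

lemma fluxPairing_ramp_eq_of_ge (hJ : IsProperFlux J g L) (hdiv : ∀ x ∉ K, ∑' y, J x y = 0)
    (hm : 0 < m) (hn : 0 < n) (hα : ∀ x ∈ K, α + m ≤ g x) (hβ : ∀ x ∈ K, β + n ≤ g x) :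
    fluxPairing J (fun x => ramp α m (g x)) = fluxPairing J fun x => ramp β n (g x) :=
  hJ.fluxPairing_ramp_eq hdiv hm hn fun x hx => by
    rw [ramp_of_ge hm (hα x hx), ramp_of_ge hn (hβ x hx)]

end IsProperFlux

end ProperFlux

section LogRatio

open Real

lemma exp_sub_exp (s t : ℝ) : exp s - exp t = 2 * exp ((s + t) / 2) * sinh ((s - t) / 2) := by
  have hs : exp s = exp ((s + t) / 2) * exp ((s - t) / 2) := by
    rw [← exp_add]
    ring_nf
  have ht : exp t = exp ((s + t) / 2) * exp (-((s - t) / 2)) := by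
    rw [← exp_add]
    ring_nf
  rw [sinh_eq, hs, ht]
  ring

lemma sq_le_mul_sinh (s : ℝ) : s ^ 2 ≤ s * sinh s := by
  rcases le_total 0 s with hs | hs
  · nlinarith [self_le_sinh_iff.2 hs]
  · nlinarith [sinh_le_self_iff.2 hs]

lemma mul_sinh_le_sinh_sq (s : ℝ) : s * sinh s ≤ sinh s ^ 2 := by
  rcases le_total 0 s with hs | hs
  · nlinarith [self_le_sinh_iff.2 hs, sinh_nonneg_iff.2 hs]
  · nlinarith [sinh_le_self_iff.2 hs, sinh_nonpos_iff.2 hs]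

lemma sqrt_mul_mul_log_sub_log_sq_le {P Q : ℝ} (hP : 0 < P) (hQ : 0 < Q) :
    √(P * Q) * (log P - log Q) ^ 2 ≤ (P - Q) * (log P - log Q) := by
  obtain ⟨s, rfl⟩ : ∃ s, exp s = P := ⟨log P, exp_log hP⟩
  obtain ⟨t, rfl⟩ : ∃ t, exp t = Q := ⟨log Q, exp_log hQ⟩
  rw [log_exp, log_exp, ← exp_add, ← exp_half, exp_sub_exp]
  calc exp ((s + t) / 2) * (s - t) ^ 2 = 4 * exp ((s + t) / 2) * ((s - t) / 2) ^ 2 := by ring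
    _ ≤ 4 * exp ((s + t) / 2) * ((s - t) / 2 * sinh ((s - t) / 2)) := by
      gcongr
      exact sq_le_mul_sinh _
    _ = 2 * exp ((s + t) / 2) * sinh ((s - t) / 2) * (s - t) := by ring

lemma sub_mul_log_sub_log_le {P Q : ℝ} (hP : 0 < P) (hQ : 0 < Q) :
    (P - Q) * (log P - log Q) ≤ 4 * cosh ((log P - log Q) / 4) * (√P - √Q) ^ 2 := by
  obtain ⟨s, rfl⟩ : ∃ s, exp s = P := ⟨log P, exp_log hP⟩
  obtain ⟨t, rfl⟩ : ∃ t, exp t = Q := ⟨log Q, exp_log hQ⟩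
  have hsinh : sinh ((s - t) / 2) = 2 * sinh ((s - t) / 4) * cosh ((s - t) / 4) := by
    rw [← sinh_two_mul]
    ring_nf
  have hsqrt : (√(exp s) - √(exp t)) ^ 2 = 4 * exp ((s + t) / 2) * sinh ((s - t) / 4) ^ 2 := by
    have hexp : exp ((s + t) / 2) = exp ((s + t) / 4) ^ 2 := by
      rw [← exp_nat_mul]
      ring_nf
    rw [← exp_half, ← exp_half, exp_sub_exp, hexp]
    ring_nf
  rw [log_exp, log_exp, exp_sub_exp, hsinh, hsqrt]
  calc 2 * exp ((s + t) / 2) * (2 * sinh ((s - t) / 4) * cosh ((s - t) / 4)) * (s - t)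
      = 16 * exp ((s + t) / 2) * cosh ((s - t) / 4) * ((s - t) / 4 * sinh ((s - t) / 4)) := by
        ring
    _ ≤ 16 * exp ((s + t) / 2) * cosh ((s - t) / 4) * sinh ((s - t) / 4) ^ 2 := by
      have := cosh_pos ((s - t) / 4)
      gcongr
      exact mul_sinh_le_sinh_sq _
    _ = 4 * cosh ((s - t) / 4) * (4 * exp ((s + t) / 2) * sinh ((s - t) / 4) ^ 2) := by ring

variable {X : Type*} {b : X → X → ℝ} {a c : X → ℝ}

/-- The logarithm of `a / c`; it exhausts the graph when `a / (a + c)` is proper to `(0, 1)`. -/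
noncomputable def logRatio (a c : X → ℝ) (x : X) : ℝ :=
  log (a x / c x)

/-- The current (discrete Wronskian) of `a` and `c`; its divergence at `x` is
`c(x) Ha(x) - a(x) Hc(x)`. -/
def current (b : X → X → ℝ) (a c : X → ℝ) (x y : X) : ℝ :=
  b x y * (a x * c y - c x * a y)

lemma log_mul_sub_log_mul (ha : ∀ x, 0 < a x) (hc : ∀ x, 0 < c x) (x y : X) :
    log (a x * c y) - log (c x * a y) = logRatio a c x - logRatio a c y := by
  rw [logRatio, logRatio, log_mul (ha x).ne' (hc y).ne', log_mul (hc x).ne' (ha y).ne',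
    log_div (ha x).ne' (hc x).ne', log_div (ha y).ne' (hc y).ne']
  ring

end LogRatio

section Current

open Real

variable {X : Type} {b : X → X → ℝ} {q a c : X → ℝ}

lemma tsum_current {x : X} (hfin : HasFiniteSupport (b x)) :
    ∑' y, current b a c x y = c x * schrod b q a x - a x * schrod b q c x := by
  have hlap : ∑' y, current b a c x y = c x * lap b a x - a x * lap b c x := by
    rw [lap, lap, ← tsum_mul_left, ← tsum_mul_left,
      ← ((summable_row hfin _).mul_left _).tsum_sub ((summable_row hfin _).mul_left _)]
    refine tsum_congr fun y => ?_
    rw [current]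
    ring
  rw [hlap, schrod, schrod]
  ring

lemma groundStateTransform_mul_sq_le_current_mul (hnonneg : ∀ x y, 0 ≤ b x y)
    (ha : ∀ x, 0 < a x) (hc : ∀ x, 0 < c x) (x y : X) :
    groundStateTransform b (geomMean a c) x y * (logRatio a c x - logRatio a c y) ^ 2 ≤
      current b a c x y * (logRatio a c x - logRatio a c y) := by
  have hsqrt : √(a x * c y * (c x * a y)) = geomMean a c x * geomMean a c y := by
    rw [geomMean, geomMean, ← sqrt_mul (mul_pos (ha x) (hc x)).le]
    ring_nf
  have h := sqrt_mul_mul_log_sub_log_sq_le (mul_pos (ha x) (hc y)) (mul_pos (hc x) (ha y))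
  rw [log_mul_sub_log_mul ha hc, hsqrt] at h
  simpa only [groundStateTransform, current, mul_assoc] using
    mul_le_mul_of_nonneg_left h (hnonneg x y)

lemma current_mul_le_cosh_mul (hnonneg : ∀ x y, 0 ≤ b x y) (ha : ∀ x, 0 < a x)
    (hc : ∀ x, 0 < c x) (x y : X) :
    current b a c x y * (logRatio a c x - logRatio a c y) ≤
      4 * cosh ((logRatio a c x - logRatio a c y) / 4) *
        (a x * c x * (b x y * (√(a y / a x) - √(c y / c x)) ^ 2)) := by
  have hfactor : (√(a x * c y) - √(c x * a y)) ^ 2 =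
      a x * c x * (√(a y / a x) - √(c y / c x)) ^ 2 := by
    have hx : 0 ≤ a x * c x := (mul_pos (ha x) (hc x)).le
    have hP : a x * c y = a x * c x * (c y / c x) := by
      have := (hc x).ne'
      field_simp
    have hQ : c x * a y = a x * c x * (a y / a x) := by
      have := (ha x).ne'
      field_simp
    rw [hP, hQ, sqrt_mul hx, sqrt_mul hx, ← mul_sub, mul_pow, sq_sqrt hx]
    ring
  have h := sub_mul_log_sub_log_le (mul_pos (ha x) (hc y)) (mul_pos (hc x) (ha y))
  rw [log_mul_sub_log_mul ha hc, hfactor] at h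
  calc current b a c x y * (logRatio a c x - logRatio a c y)
      = b x y * ((a x * c y - c x * a y) * (logRatio a c x - logRatio a c y)) := mul_assoc ..
    _ ≤ b x y * (4 * cosh ((logRatio a c x - logRatio a c y) / 4) *
          (a x * c x * (√(a y / a x) - √(c y / c x)) ^ 2)) :=
        mul_le_mul_of_nonneg_left h (hnonneg x y)
    _ = _ := by ring

end Current

lemma exists_rel_of_reflTransGen {α : Type*} {r : α → α → Prop} {p : α → Prop} {x y : α}
    (h : Relation.ReflTransGen r x y) (hx : p x) (hy : ¬p y) : ∃ z w, r z w ∧ p z ∧ ¬p w := by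
  by_contra! hstep
  induction h with
  | refl => exact hy hx
  | tail _ hzw ih => exact ih fun hz => hy (hstep _ _ hzw hz)

/-- Two positive functions on a weighted graph whose logarithmic ratio has finite compact bands and
varies by at most `L` along edges: assumptions (a) and (b) for `a = u` and `c = v - u`. -/
structure IsProperPair {X : Type*} (b : X → X → ℝ) (a c : X → ℝ) (L : ℝ) : Prop where
  nonneg : ∀ x y, 0 ≤ b x y
  symm : ∀ x y, b x y = b y x
  pos_left : ∀ x, 0 < a x
  pos_right : ∀ x, 0 < c x
  finite_preimage_Icc : ∀ α β, (logRatio a c ⁻¹' Set.Icc α β).Finite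
  abs_sub_le : ∀ x y, b x y ≠ 0 → |logRatio a c x - logRatio a c y| ≤ L

namespace IsProperPair

open Real

variable {X : Type} {b : X → X → ℝ} {q a c : X → ℝ} {K : Set X} {L α β n N : ℝ}

lemma isProperFlux (P : IsProperPair b a c L) : IsProperFlux (current b a c) (logRatio a c) L where
  antisymm x y := by
    rw [current, current, P.symm x y]
    ring
  finite_preimage_Icc := P.finite_preimage_Icc
  abs_sub_le x y h := P.abs_sub_le x y (left_ne_zero_of_mul h)

lemma hasFiniteSupport_row (P : IsProperPair b a c L) (x : X) : HasFiniteSupport (b x) := by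
  refine (P.finite_preimage_Icc (logRatio a c x - L) (logRatio a c x + L)).subset fun y hy => ?_
  have := abs_le.1 (P.abs_sub_le x y hy)
  constructor <;> linarith

lemma groundStateTransform_nonneg (P : IsProperPair b a c L) (x y : X) :
    0 ≤ groundStateTransform b (geomMean a c) x y :=
  mul_nonneg (P.nonneg x y) <|
    (mul_pos (geomMean_pos P.pos_left P.pos_right x) (geomMean_pos P.pos_left P.pos_right y)).le

lemma current_mul_sub_nonneg (P : IsProperPair b a c L) (x y : X) :
    0 ≤ current b a c x y * (logRatio a c x - logRatio a c y) :=
  (mul_nonneg (P.groundStateTransform_nonneg x y) (sq_nonneg _)).trans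
    (groundStateTransform_mul_sq_le_current_mul P.nonneg P.pos_left P.pos_right x y)

/-- If the two ramps have slopes `θ₁, θ₂ ∈ [0, 1/n]` between the levels of `x` and `y`, then
`(θ₁ - θ₂)² ≤ (θ₁ + θ₂)/n`. -/
lemma groundStateTransform_mul_plateau_sub_sq_le (P : IsProperPair b a c L) (hn : 0 < n) (x y : X) :
    groundStateTransform b (geomMean a c) x y *
        (plateau α β n (logRatio a c x) - plateau α β n (logRatio a c y)) ^ 2 ≤
      1 / n * (current b a c x y * (ramp α n (logRatio a c x) - ramp α n (logRatio a c y)) +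
        current b a c x y * (ramp β n (logRatio a c x) - ramp β n (logRatio a c y))) := by
  have hle := groundStateTransform_mul_sq_le_current_mul P.nonneg P.pos_left P.pos_right x y
  have hpos := P.current_mul_sub_nonneg x y
  set s := logRatio a c x
  set t := logRatio a c y
  obtain ⟨θ₁, h₁, h₁', hα⟩ := exists_ramp_sub_eq_mul α hn s t
  obtain ⟨θ₂, h₂, h₂', hβ⟩ := exists_ramp_sub_eq_mul β hn s t
  have hplateau : plateau α β n s - plateau α β n t = (θ₁ - θ₂) * (s - t) := by
    rw [sub_mul, ← hα, ← hβ, plateau, plateau]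
    ring
  have hslope : (θ₁ - θ₂) ^ 2 ≤ 1 / n * (θ₁ + θ₂) := by
    nlinarith [mul_nonneg h₁ (sub_nonneg.2 h₁'), mul_nonneg h₂ (sub_nonneg.2 h₂'),
      mul_nonneg h₁ h₂]
  rw [hplateau, hα, hβ]
  calc groundStateTransform b (geomMean a c) x y * ((θ₁ - θ₂) * (s - t)) ^ 2
      = (θ₁ - θ₂) ^ 2 * (groundStateTransform b (geomMean a c) x y * (s - t) ^ 2) := by ring
    _ ≤ (θ₁ - θ₂) ^ 2 * (current b a c x y * (s - t)) := by gcongr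
    _ ≤ 1 / n * (θ₁ + θ₂) * (current b a c x y * (s - t)) := by gcongr
    _ = _ := by ring

lemma hasFiniteSupport_plateau (P : IsProperPair b a c L) (hn : 0 < n) :
    HasFiniteSupport fun x => plateau α β n (logRatio a c x) :=
  P.isProperFlux.hasFiniteSupport_ramp_sub_ramp hn hn

lemma energy_plateau_le (P : IsProperPair b a c L) (hn : 0 < n) :
    energy (groundStateTransform b (geomMean a c)) (fun x => plateau α β n (logRatio a c x)) ≤
      1 / n * (fluxPairing (current b a c) (fun x => ramp α n (logRatio a c x)) +
        fluxPairing (current b a c) fun x => ramp β n (logRatio a c x)) := by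
  have hα := P.isProperFlux.summable_mul_ramp_sub α hn
  have hβ := P.isProperFlux.summable_mul_ramp_sub β hn
  have henergy : Summable fun p : X × X => groundStateTransform b (geomMean a c) p.1 p.2 *
      (plateau α β n (logRatio a c p.1) - plateau α β n (logRatio a c p.2)) ^ 2 :=
    summable_of_hasFiniteSupport <| hasFiniteSupport_mul_sub_sq
      (fun x => (P.hasFiniteSupport_row x).fun_mul_left _) (groundStateTransform_comm P.symm)
      (P.hasFiniteSupport_plateau hn)
  have hle (p : X × X) :=
    P.groundStateTransform_mul_plateau_sub_sq_le (α := α) (β := β) hn p.1 p.2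
  have h := henergy.tsum_le_tsum hle ((hα.add hβ).mul_left (1 / n))
  rw [tsum_mul_left, hα.tsum_add hβ] at h
  rw [energy, fluxPairing, fluxPairing, ← mul_add, mul_left_comm]
  exact mul_le_mul_of_nonneg_left h one_half_pos.le

lemma exists_energy_lt (P : IsProperPair b a c L) (hK : K.Finite)
    (hdiv : ∀ x ∉ K, ∑' y, current b a c x y = 0) (z : X) {ε : ℝ} (hε : 0 < ε) :
    ∃ f : X → ℝ, HasFiniteSupport f ∧ f z = 1 ∧
      energy (groundStateTransform b (geomMean a c)) f < ε := by
  obtain ⟨R, hR⟩ := ((hK.insert z).image fun x => |logRatio a c x|).bddAbove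
  have hbound (x : X) (hx : x ∈ insert z K) : -R ≤ logRatio a c x ∧ logRatio a c x ≤ R :=
    abs_le.1 (hR (Set.mem_image_of_mem _ hx))
  let flux (α n : ℝ) := fluxPairing (current b a c) fun x => ramp α n (logRatio a c x)
  obtain ⟨n, hn⟩ := exists_gt (max (max R 0) ((flux (-R - 1) 1 + flux R 1) / ε))
  obtain ⟨⟨hnR, hn0⟩, hnε⟩ : (R < n ∧ 0 < n) ∧ (flux (-R - 1) 1 + flux R 1) / ε < n := by
    simpa only [max_lt_iff] using hn
  have hz := hbound z (Set.mem_insert z K)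
  refine ⟨fun x => plateau (-2 * n) n n (logRatio a c x),
    P.hasFiniteSupport_plateau hn0,
    plateau_eq_one hn0 (by linarith) (by linarith), (P.energy_plateau_le hn0).trans_lt ?_⟩
  have hlow : flux (-2 * n) n = flux (-R - 1) 1 :=
    P.isProperFlux.fluxPairing_ramp_eq_of_ge hdiv hn0 one_pos
      (fun x hx => by linarith [hbound x (Set.mem_insert_of_mem z hx)])
      (fun x hx => by linarith [hbound x (Set.mem_insert_of_mem z hx)])
  have hhigh : flux n n = flux R 1 :=
    P.isProperFlux.fluxPairing_ramp_eq_of_le hdiv hn0 one_pos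
      (fun x hx => by linarith [hbound x (Set.mem_insert_of_mem z hx)])
      (fun x hx => (hbound x (Set.mem_insert_of_mem z hx)).2)
  change 1 / n * (flux (-2 * n) n + flux n n) < ε
  rw [hlow, hhigh, one_div_mul_eq_div]
  exact (div_lt_comm₀ hε hn0).1 hnε

lemma fluxPairing_ramp_pos (P : IsProperPair b a c L)
    (hconn : ∀ x y, Relation.ReflTransGen (fun z w => 0 < b z w) x y) (hn : 0 < n)
    (hlow : ∃ x, logRatio a c x ≤ α) (hhigh : ∃ x, α < logRatio a c x) :
    0 < fluxPairing (current b a c) fun x => ramp α n (logRatio a c x) := by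
  obtain ⟨x₀, hx₀⟩ := hlow
  obtain ⟨y₀, hy₀⟩ := hhigh
  obtain ⟨x, y, hxy, hx, hy⟩ :=
    exists_rel_of_reflTransGen (p := fun x => logRatio a c x ≤ α) (hconn x₀ y₀) hx₀ hy₀.not_ge
  have hslope (s t : X) : ∃ θ, 0 ≤ θ ∧
      ramp α n (logRatio a c s) - ramp α n (logRatio a c t) =
        θ * (logRatio a c s - logRatio a c t) := by
    obtain ⟨θ, hθ, -, h⟩ := exists_ramp_sub_eq_mul α hn (logRatio a c s) (logRatio a c t)
    exact ⟨θ, hθ, h⟩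
  refine mul_pos one_half_pos <| (P.isProperFlux.summable_mul_ramp_sub α hn).tsum_pos
    (fun p => ?_) (x, y) ?_
  · obtain ⟨θ, hθ, h⟩ := hslope p.1 p.2
    rw [h, mul_left_comm]
    exact mul_nonneg hθ (P.current_mul_sub_nonneg p.1 p.2)
  · obtain ⟨θ, hθ, h⟩ := hslope x y
    have hjump := ramp_pos hn (not_le.1 hy)
    have hθ' : θ ≠ 0 := by
      rintro rfl
      rw [ramp_of_le hn hx] at h
      linarith
    have hedge : 0 < groundStateTransform b (geomMean a c) x y :=
      mul_pos hxy <|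
        mul_pos (geomMean_pos P.pos_left P.pos_right x) (geomMean_pos P.pos_left P.pos_right y)
    have hsub : logRatio a c x - logRatio a c y ≠ 0 := by linarith
    change 0 < current b a c x y * (ramp α n (logRatio a c x) - ramp α n (logRatio a c y))
    rw [h, mul_left_comm]
    exact mul_pos (hθ.lt_of_ne' hθ') <| (mul_pos hedge (sq_pos_iff.2 hsub)).trans_le
      (groundStateTransform_mul_sq_le_current_mul P.nonneg P.pos_left P.pos_right x y)

lemma current_mul_ramp_sub_le (P : IsProperPair b a c L) (hn : 0 < n) (x y : X) :
    current b a c x y * (ramp α n (logRatio a c x) - ramp α n (logRatio a c y)) ≤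
      4 * cosh (L / 4) / n * (a x * c x) * (b x y * (√(a y / a x) - √(c y / c x)) ^ 2) := by
  rcases eq_or_ne (b x y) 0 with hb | hb
  · simp [current, hb]
  obtain ⟨θ, -, hθ, h⟩ := exists_ramp_sub_eq_mul α hn (logRatio a c x) (logRatio a c y)
  have hcosh : cosh ((logRatio a c x - logRatio a c y) / 4) ≤ cosh (L / 4) := by
    rw [cosh_le_cosh, abs_div, abs_div]
    exact div_le_div_of_nonneg_right ((P.abs_sub_le x y hb).trans (le_abs_self L)) (abs_nonneg _)
  have hac : 0 ≤ a x * c x := (mul_pos (P.pos_left x) (P.pos_right x)).le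
  have hb := P.nonneg x y
  calc current b a c x y * (ramp α n (logRatio a c x) - ramp α n (logRatio a c y))
      = θ * (current b a c x y * (logRatio a c x - logRatio a c y)) := by rw [h, mul_left_comm]
    _ ≤ 1 / n * (current b a c x y * (logRatio a c x - logRatio a c y)) :=
        mul_le_mul_of_nonneg_right hθ (P.current_mul_sub_nonneg x y)
    _ ≤ 1 / n * (4 * cosh (L / 4) *
          (a x * c x * (b x y * (√(a y / a x) - √(c y / c x)) ^ 2))) := by
        refine mul_le_mul_of_nonneg_left ?_ (one_div_pos.2 hn).le
        refine (current_mul_le_cosh_mul P.nonneg P.pos_left P.pos_right x y).trans ?_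
        gcongr
    _ = _ := by ring

lemma tsum_current_mul_ramp_sub_le (P : IsProperPair b a c L) (hn : 0 < n) (x : X) :
    ∑' y, current b a c x y * (ramp α n (logRatio a c x) - ramp α n (logRatio a c y)) ≤
      8 * cosh (L / 4) / n * (a x * c x * harmonicWeight b a c x) := by
  have hrow : Summable fun y =>
      current b a c x y * (ramp α n (logRatio a c x) - ramp α n (logRatio a c y)) :=
    summable_row (P.isProperFlux.hasFiniteSupport_row x) _
  refine (hrow.tsum_le_tsum (P.current_mul_ramp_sub_le hn x)
    ((summable_row (P.hasFiniteSupport_row x) _).mul_left _)).trans_eq ?_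
  rw [tsum_mul_left, harmonicWeight]
  ring

lemma tsum_current_mul_ramp_sub_eq_zero (P : IsProperPair b a c L) (hn : 0 < n) (hα : N + L ≤ α)
    {x : X} (hx : logRatio a c x < N) :
    ∑' y, current b a c x y * (ramp α n (logRatio a c x) - ramp α n (logRatio a c y)) = 0 := by
  refine (tsum_congr fun y => ?_).trans tsum_zero
  rcases eq_or_ne (current b a c x y) 0 with hxy | hxy
  · rw [hxy, zero_mul]
  · have hjump := P.isProperFlux.abs_sub_le x y hxy
    have hL := (abs_nonneg _).trans hjump
    rw [ramp_of_le hn (by linarith), ramp_of_le hn (by linarith [abs_le.1 hjump]), sub_self,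
      mul_zero]

lemma fluxPairing_ramp_le (P : IsProperPair b a c L) (hn : 0 < n) (hα : N + L ≤ α)
    (hS : Summable ({x | N ≤ logRatio a c x}.indicator fun x =>
      a x * c x * harmonicWeight b a c x)) :
    fluxPairing (current b a c) (fun x => ramp α n (logRatio a c x)) ≤
      (4 * cosh (L / 4) * ∑' x, {x | N ≤ logRatio a c x}.indicator
        (fun x => a x * c x * harmonicWeight b a c x) x) / n := by
  have hsum := P.isProperFlux.summable_mul_ramp_sub α hn
  have hrow (x : X) :
      ∑' y, current b a c x y * (ramp α n (logRatio a c x) - ramp α n (logRatio a c y)) ≤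
        8 * cosh (L / 4) / n * {x | N ≤ logRatio a c x}.indicator
          (fun x => a x * c x * harmonicWeight b a c x) x := by
    by_cases hx : x ∈ {x | N ≤ logRatio a c x}
    · rw [Set.indicator_of_mem hx]
      exact P.tsum_current_mul_ramp_sub_le hn x
    · rw [Set.indicator_of_notMem hx, mul_zero]
      exact (P.tsum_current_mul_ramp_sub_eq_zero hn hα (not_le.1 hx)).le
  have h := hsum.prod.tsum_le_tsum hrow (hS.mul_left _)
  rw [tsum_mul_left] at h
  rw [fluxPairing, hsum.tsum_prod]
  refine (mul_le_mul_of_nonneg_left h one_half_pos.le).trans_eq ?_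
  ring

/-- The flux through high levels is a positive constant, while it would be `O(1/n)` across ramps of
length `n` if the sum converged. -/
theorem not_summable_indicator (P : IsProperPair b a c L)
    (hdiv : ∀ x ∉ K, ∑' y, current b a c x y = 0)
    (hconn : ∀ x y, Relation.ReflTransGen (fun z w => 0 < b z w) x y)
    (hunbdd : ∀ R, ∃ x, R < logRatio a c x) (hN : ∀ x ∈ K, logRatio a c x ≤ N) :
    ¬Summable ({x | N ≤ logRatio a c x}.indicator fun x =>
      a x * c x * harmonicWeight b a c x) := by
  intro hS
  obtain ⟨x₀, hx₀⟩ := hunbdd (max N (N + L))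
  have hK (x : X) (hx : x ∈ K) : logRatio a c x ≤ logRatio a c x₀ :=
    (hN x hx).trans ((le_max_left _ _).trans hx₀.le)
  have hflux (n : ℝ) (hn : 0 < n) := P.fluxPairing_ramp_le hn ((le_max_right _ _).trans hx₀.le) hS
  set bound := 4 * cosh (L / 4) * ∑' x, {x | N ≤ logRatio a c x}.indicator
    (fun x => a x * c x * harmonicWeight b a c x) x
  have hpos := P.fluxPairing_ramp_pos hconn one_pos ⟨x₀, le_rfl⟩ (hunbdd _)
  set δ := fluxPairing (current b a c) fun x => ramp (logRatio a c x₀) 1 (logRatio a c x)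
  have hle (n : ℝ) (hn : 0 < n) : n * δ ≤ bound := by
    rw [← le_div_iff₀' hn]
    exact (P.isProperFlux.fluxPairing_ramp_eq_of_le hdiv one_pos hn hK hK).trans_le (hflux n hn)
  obtain ⟨n, hn⟩ := exists_lt_nsmul hpos (max bound 0)
  rw [nsmul_eq_mul, max_lt_iff] at hn
  exact (hle n (pos_of_mul_pos_left hn.2 hpos.le)).not_gt hn.1

theorem not_summable_mul_hardyWeight (P : IsProperPair b a c L) (hK : K.Finite)
    (hdiv : ∀ x ∉ K, ∑' y, current b a c x y = 0)
    (hweight : ∀ x ∉ K, hardyWeight b q (geomMean a c) x = harmonicWeight b a c x)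
    (hconn : ∀ x y, Relation.ReflTransGen (fun z w => 0 < b z w) x y)
    (hunbdd : ∀ R, ∃ x, R < logRatio a c x) :
    ¬Summable fun x => a x * c x * hardyWeight b q (geomMean a c) x := by
  obtain ⟨R, hR⟩ := (hK.image (logRatio a c)).bddAbove
  have hbound (x : X) (hx : x ∈ K) : logRatio a c x ≤ R := hR (Set.mem_image_of_mem _ hx)
  have heq : Set.EqOn (fun x => a x * c x * hardyWeight b q (geomMean a c) x)
      (fun x => a x * c x * harmonicWeight b a c x) {x | R + 1 ≤ logRatio a c x} := fun x hx => by
    have hlt : R < logRatio a c x := (lt_add_one R).trans_le hx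
    simp only [hweight x fun hxK => (hbound x hxK).not_gt hlt]
  intro hS
  refine P.not_summable_indicator (N := R + 1) hdiv hconn hunbdd
    (fun x hx => (hbound x hx).trans (le_add_of_nonneg_right zero_le_one)) ?_
  rw [← Set.indicator_congr heq]
  exact hS.indicator _

lemma exists_lt_tsum_mul_plateau_sq (P : IsProperPair b a c L) {f : X → ℝ} (hf : ∀ x, 0 ≤ f x)
    (hns : ¬Summable ({x | α + 1 ≤ logRatio a c x}.indicator f)) (T : ℝ) :
    ∃ β ≥ α, T < ∑' x, f x * plateau α β 1 (logRatio a c x) ^ 2 := by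
  contrapose! hns
  refine summable_of_sum_le (c := T) (Set.indicator_nonneg fun x _ => hf x) fun s => ?_
  obtain ⟨R, hR⟩ := (s.finite_toSet.image (logRatio a c)).bddAbove
  have hsum : Summable fun x => f x * plateau α (max α R) 1 (logRatio a c x) ^ 2 :=
    summable_mul_sq (P.hasFiniteSupport_plateau one_pos) f
  refine (Finset.sum_le_sum fun x hx => ?_).trans <|
    (hsum.sum_le_tsum s fun x _ => mul_nonneg (hf x) (sq_nonneg _)).trans
      (hns _ (le_max_left α R))
  by_cases hx' : x ∈ {x | α + 1 ≤ logRatio a c x}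
  · have hxR : logRatio a c x ≤ max α R :=
      (hR (Set.mem_image_of_mem _ hx)).trans (le_max_right _ _)
    rw [Set.indicator_of_mem hx', plateau_eq_one one_pos hx' hxR, one_pow, mul_one]
  · rw [Set.indicator_of_notMem hx']
    exact mul_nonneg (hf x) (sq_nonneg _)

/-- Test functions are plateaus of fixed slope above `W ∪ K`: their energy stays bounded by twice
the flux, while the weight they carry is unbounded. -/
theorem exists_quadForm_lt (P : IsProperPair b a c L)
    (hK : K.Finite) (hdiv : ∀ x ∉ K, ∑' y, current b a c x y = 0)
    (hweight : ∀ x ∉ K, hardyWeight b q (geomMean a c) x = harmonicWeight b a c x)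
    (hconn : ∀ x y, Relation.ReflTransGen (fun z w => 0 < b z w) x y)
    (hunbdd : ∀ R, ∃ x, R < logRatio a c x) {W : Set X} (hW : W.Finite) {lam : ℝ} (hlam : 0 < lam) :
    ∃ φ : X → ℝ, HasFiniteSupport φ ∧ (∀ x ∈ W, φ x = 0) ∧
      quadForm b q φ < (1 + lam) * ∑' x, hardyWeight b q (geomMean a c) x * φ x ^ 2 := by
  obtain ⟨R, hR⟩ := ((hK.union hW).image (logRatio a c)).bddAbove
  have hbound (x : X) (hx : x ∈ K ∪ W) : logRatio a c x ≤ R := hR (Set.mem_image_of_mem _ hx)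
  have hKR (x : X) (hx : x ∈ K) : logRatio a c x ≤ R := hbound x (Or.inl hx)
  let δ := fluxPairing (current b a c) fun x => ramp R 1 (logRatio a c x)
  obtain ⟨β, hβ, hlt⟩ := P.exists_lt_tsum_mul_plateau_sq
    (fun x => mul_nonneg (mul_pos (P.pos_left x) (P.pos_right x)).le
      (harmonicWeight_nonneg P.nonneg x))
    (P.not_summable_indicator (N := R + 1) hdiv hconn hunbdd fun x hx =>
      (hKR x hx).trans (le_add_of_nonneg_right zero_le_one))
    (2 * δ / lam)
  let f (x : X) := plateau R β 1 (logRatio a c x)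
  have hf : HasFiniteSupport f := P.hasFiniteSupport_plateau one_pos
  have hf_zero (x : X) (hx : x ∈ K ∪ W) : f x = 0 := plateau_of_le one_pos hβ (hbound x hx)
  have hsum : ∑' x, hardyWeight b q (geomMean a c) x * (geomMean a c x * f x) ^ 2 =
      ∑' x, a x * c x * harmonicWeight b a c x * f x ^ 2 := by
    refine tsum_congr fun x => ?_
    by_cases hx : x ∈ K
    · simp only [hf_zero x (Or.inl hx), mul_zero, zero_pow two_ne_zero]
    · rw [hweight x hx, mul_pow, geomMean_sq P.pos_left P.pos_right]
      ring
  have henergy : energy (groundStateTransform b (geomMean a c)) f ≤ 2 * δ := by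
    have hδ := P.isProperFlux.fluxPairing_ramp_eq_of_le hdiv one_pos one_pos hKR
      fun x hx => (hKR x hx).trans hβ
    refine (P.energy_plateau_le one_pos).trans_eq ?_
    rw [← hδ, one_div_one, one_mul, two_mul]
  refine ⟨fun x => geomMean a c x * f x, hf.fun_mul_right _,
    fun x hx => mul_eq_zero_of_right _ (hf_zero x (Or.inr hx)), ?_⟩
  rw [quadForm_mul P.symm P.hasFiniteSupport_row
    (fun x => (geomMean_pos P.pos_left P.pos_right x).ne') hf, hsum]
  linarith [(div_lt_iff₀ hlam).1 hlt]

end IsProperPair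

section Quotient

open Real

variable {X : Type*} {b : X → X → ℝ} {u v : X → ℝ}

lemma sigmoid_logRatio {x : X} (hu : 0 < u x) (hvu : 0 < v x - u x) :
    sigmoid (logRatio u (fun z => v z - u z) x) = u x / v x := by
  have hv : v x ≠ 0 := by linarith
  rw [sigmoid_def, logRatio, exp_neg, exp_log (div_pos hu hvu)]
  have := hu.ne'
  field_simp
  ring

lemma exp_logRatio_sub {a c : X → ℝ} (ha : ∀ x, 0 < a x) (hc : ∀ x, 0 < c x) (x y : X) :
    exp (logRatio a c x - logRatio a c y) = a x / c x / (a y / c y) := by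
  rw [exp_sub, logRatio, logRatio, exp_log (div_pos (ha x) (hc x)),
    exp_log (div_pos (ha y) (hc y))]

lemma finite_preimage_logRatio_Icc (hu : ∀ x, 0 < u x) (hvu : ∀ x, 0 < v x - u x)
    (hproper : ∀ I : Set ℝ, IsCompact I → I ⊆ Set.Ioo (0 : ℝ) 1 →
      ((fun x => u x / v x) ⁻¹' I).Finite) (α β : ℝ) :
    (logRatio u (fun z => v z - u z) ⁻¹' Set.Icc α β).Finite := by
  have hcompact := hproper (Set.Icc (sigmoid α) (sigmoid β)) isCompact_Icc
    fun t ht => ⟨(sigmoid_pos α).trans_le ht.1, ht.2.trans_lt (sigmoid_lt_one β)⟩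
  refine hcompact.subset fun x hx => ?_
  change u x / v x ∈ Set.Icc (sigmoid α) (sigmoid β)
  rw [← sigmoid_logRatio (hu x) (hvu x)]
  exact ⟨sigmoid_le_iff.2 hx.1, sigmoid_le_iff.2 hx.2⟩

lemma exists_lt_logRatio (hu : ∀ x, 0 < u x) (hvu : ∀ x, 0 < v x - u x)
    (hsup : ∀ ε : ℝ, 0 < ε → ∃ x, 1 - ε < u x / v x) (R : ℝ) :
    ∃ x, R < logRatio u (fun z => v z - u z) x := by
  obtain ⟨x, hx⟩ := hsup (1 - sigmoid R) (sub_pos.2 (sigmoid_lt_one R))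
  rw [sub_sub_cancel, ← sigmoid_logRatio (hu x) (hvu x), sigmoid_lt_iff] at hx
  exact ⟨x, hx⟩

lemma abs_logRatio_sub_le {C : ℝ} (hsymm : ∀ x y, b x y = b y x) (hu : ∀ x, 0 < u x)
    (hvu : ∀ x, 0 < v x - u x)
    (hosc : ∀ x y, 0 < b x y →
      ((u x / v x) * (1 - u y / v y)) / ((u y / v y) * (1 - u x / v x)) ≤ C)
    {x y : X} (hxy : 0 < b x y) :
    |logRatio u (fun z => v z - u z) x - logRatio u (fun z => v z - u z) y| ≤ log C := by
  have hle (x y : X) (hxy : 0 < b x y) :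
      logRatio u (fun z => v z - u z) x - logRatio u (fun z => v z - u z) y ≤ log C := by
    have hv (z : X) : 0 < v z := by linarith [hu z, hvu z]
    have hquot : exp (logRatio u (fun z => v z - u z) x - logRatio u (fun z => v z - u z) y) =
        ((u x / v x) * (1 - u y / v y)) / ((u y / v y) * (1 - u x / v x)) := by
      rw [exp_logRatio_sub hu hvu, one_sub_div (hv x).ne', one_sub_div (hv y).ne']
      have := (hv x).ne'
      have := (hv y).ne'
      have := (hu y).ne'
      have := (hvu x).ne'
      have := (hvu y).ne'
      field_simp
    have hexp := hquot.trans_le (hosc x y hxy)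
    exact (le_log_iff_exp_le ((exp_pos _).trans_le hexp)).2 hexp
  exact abs_sub_le_iff.2 ⟨hle x y hxy, hle y x (hsymm x y ▸ hxy)⟩

end Quotient

end OptimalHardy

open OptimalHardy in
theorem stmt6_general (X : Type) (b : X → X → ℝ) (q : X → ℝ)
    (hb_nonneg : ∀ x y, 0 ≤ b x y) (hb_symm : ∀ x y, b x y = b y x)
    (hconn : ∀ x y : X, Relation.ReflTransGen (fun a c => 0 < b a c) x y)
    (u v : X → ℝ) (hu_pos : ∀ x, 0 < u x) (hvu_pos : ∀ x, 0 < v x - u x)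
    (K : Set X) (hK : K.Finite)
    (hu_harm : ∀ x ∉ K, schrod b q u x = 0)
    (hvu_harm : ∀ x ∉ K, schrod b q (fun z => v z - u z) x = 0)
    (hproper : ∀ I : Set ℝ, IsCompact I → I ⊆ Set.Ioo (0 : ℝ) 1 →
      ((fun x => u x / v x) ⁻¹' I).Finite)
    (hsup : ∀ ε : ℝ, 0 < ε → ∃ x : X, 1 - ε < u x / v x)
    (hosc : ∃ C : ℝ, ∀ x y, 0 < b x y →
      ((u x / v x) * (1 - u y / v y)) / ((u y / v y) * (1 - u x / v x)) ≤ C)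
    (w : X → ℝ)
    (hw : ∀ x, w x =
      schrod b q (fun z => Real.sqrt (u z * (v z - u z))) x /
        Real.sqrt (u x * (v x - u x))) :
    ((∀ φ : X → ℝ, (Function.support φ).Finite →
        quadForm b q φ ≥ ∑' x : X, w x * φ x ^ 2) ∧
      ¬ ∃ wt : X → ℝ, (∀ x, 0 ≤ wt x) ∧ wt ≠ 0 ∧
        (∀ φ : X → ℝ, (Function.support φ).Finite →
          quadForm b q φ ≥ ∑' x : X, (w x + wt x) * φ x ^ 2)) ∧
    (¬ Summable (fun x : X => u x * (v x - u x) * w x)) ∧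
    (∀ lam : ℝ, 0 < lam → ∀ W : Set X, W.Finite →
      ∃ φ : X → ℝ, (Function.support φ).Finite ∧ (∀ x ∈ W, φ x = 0) ∧
        quadForm b q φ < (1 + lam) * ∑' x : X, w x * φ x ^ 2) ∧
    (∀ x, schrod b q u x = 0 → schrod b q v x = 0 →
      w x = (1 / 2) * ∑' y : X, b x y *
        (Real.sqrt (u y / u x) - Real.sqrt ((v y - u y) / (v x - u x))) ^ 2) := by
  obtain ⟨C, hC⟩ := hosc
  let c (x : X) := v x - u x
  obtain rfl : w = hardyWeight b q (geomMean u c) := funext hw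
  have P : IsProperPair b u c (Real.log C) :=
    { nonneg := hb_nonneg
      symm := hb_symm
      pos_left := hu_pos
      pos_right := hvu_pos
      finite_preimage_Icc := finite_preimage_logRatio_Icc hu_pos hvu_pos hproper
      abs_sub_le x y hxy := abs_logRatio_sub_le hb_symm hu_pos hvu_pos hC
        ((hb_nonneg x y).lt_of_ne' hxy) }
  have hfin := P.hasFiniteSupport_row
  have hψ := geomMean_pos P.pos_left P.pos_right
  have hdiv (x : X) (hx : x ∉ K) : ∑' y, current b u c x y = 0 := by
    rw [tsum_current (hfin x), hu_harm x hx, hvu_harm x hx, mul_zero, mul_zero, sub_zero]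
  have hweight (x : X) (hx : x ∉ K) := hardyWeight_geomMean_of_harmonic (hfin x) P.pos_left
    P.pos_right (hu_harm x hx) (hvu_harm x hx)
  have hunbdd := exists_lt_logRatio hu_pos hvu_pos hsup
  refine ⟨⟨fun φ hφ => tsum_hardyWeight_mul_sq_le_quadForm hb_nonneg hb_symm hfin hψ hφ, ?_⟩,
    P.not_summable_mul_hardyWeight hK hdiv hweight hconn hunbdd,
    fun lam hlam W hW => P.exists_quadForm_lt hK hdiv hweight hconn hunbdd hW hlam, ?_⟩
  · rintro ⟨wt, hwt, hne, hle⟩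
    exact hne <| eq_zero_of_forall_tsum_add_mul_sq_le_quadForm hb_symm hfin
      (fun x => (hψ x).ne') (fun z ε hε => P.exists_energy_lt hK hdiv z hε) hwt hle
  · intro x hux hvx
    refine hardyWeight_geomMean_of_harmonic (hfin x) P.pos_left P.pos_right hux ?_
    rw [schrod_sub (hfin x), hvx, hux, sub_zero]

/-- the supersolution construction with a bounded quotient
`u₀ = u/v` yields an optimal Hardy weight. -/
theorem stmt6 (X : Type) [Countable X] [Infinite X]
    (b : X → X → ℝ) (q : X → ℝ)
    (hb_nonneg : ∀ x y, 0 ≤ b x y) (hb_symm : ∀ x y, b x y = b y x)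
    (hb_diag : ∀ x, b x x = 0) (hb_row : ∀ x, Summable fun y => b x y)
    (hconn : ∀ x y : X, Relation.ReflTransGen (fun a c => 0 < b a c) x y)
    (u v : X → ℝ)
    (hu_mem : memF b u) (hvu_mem : memF b (fun x => v x - u x))
    (hu_pos : ∀ x, 0 < u x) (hvu_pos : ∀ x, 0 < v x - u x)
    (hu_super : ∀ x, 0 ≤ schrod b q u x)
    (hvu_super : ∀ x, 0 ≤ schrod b q (fun z => v z - u z) x)
    (K : Set X) (hK : K.Finite)
    (hu_harm : ∀ x ∉ K, schrod b q u x = 0)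
    (hvu_harm : ∀ x ∉ K, schrod b q (fun z => v z - u z) x = 0)
    (hproper : ∀ I : Set ℝ, IsCompact I → I ⊆ Set.Ioo (0 : ℝ) 1 →
      ((fun x => u x / v x) ⁻¹' I).Finite)
    (hsup : ∀ ε : ℝ, 0 < ε → ∃ x : X, 1 - ε < u x / v x)
    (hosc : ∃ C : ℝ, ∀ x y, 0 < b x y →
      ((u x / v x) * (1 - u y / v y)) / ((u y / v y) * (1 - u x / v x)) ≤ C)
    (w : X → ℝ)
    (hw : ∀ x, w x =
      schrod b q (fun z => Real.sqrt (u z * (v z - u z))) x /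
        Real.sqrt (u x * (v x - u x))) :
    ((∀ φ : X → ℝ, (Function.support φ).Finite →
        quadForm b q φ ≥ ∑' x : X, w x * φ x ^ 2) ∧
      ¬ ∃ wt : X → ℝ, (∀ x, 0 ≤ wt x) ∧ wt ≠ 0 ∧
        (∀ φ : X → ℝ, (Function.support φ).Finite →
          quadForm b q φ ≥ ∑' x : X, (w x + wt x) * φ x ^ 2)) ∧
    (¬ Summable (fun x : X => u x * (v x - u x) * w x)) ∧
    (∀ lam : ℝ, 0 < lam → ∀ W : Set X, W.Finite →
      ∃ φ : X → ℝ, (Function.support φ).Finite ∧ (∀ x ∈ W, φ x = 0) ∧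
        quadForm b q φ < (1 + lam) * ∑' x : X, w x * φ x ^ 2) ∧
    (∀ x, schrod b q u x = 0 → schrod b q v x = 0 →
      w x = (1 / 2) * ∑' y : X, b x y *
        (Real.sqrt (u y / u x) - Real.sqrt ((v y - u y) / (v x - u x))) ^ 2) := by
  exact stmt6_general X b q hb_nonneg hb_symm hconn u v hu_pos hvu_pos K hK hu_harm hvu_harm hproper
    hsup hosc w hw
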